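/- Let p be a prime, n ≥ 1, and let L be a language extending the language of rings together with n additional constant symbols c₁,…,cₙ. For every L-formula φ of the form ∀x₁…∀x_r ∃y₁…∃yₛ ψ with ψ quantifier-free, there exists an L-formula φ' with the same free variables, of the form ∀w ∃y₁…∃y_{s'} ψ' with ψ' quantifier-free, such that: for every field K of characteristic p with [K : K^p] = pⁿ, every p-basis (a₁,…,aₙ) of K, and every L-structure K' whose ring-language reduct is K and which interprets cᵢ as aᵢ, the formulas φ and φ' are equivalent in K' (they are satisfied by exactly the same assignments of their free variables). -/

import Mathlib

open FirstOrder Language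

attribute [local instance] FirstOrder.Ring.compatibleRingOfRing

universe u v w

/-- Apply existential quantifiers to the last `s` bound variables of a bounded formula. -/
def FirstOrder.Language.BoundedFormula.exsN {L : FirstOrder.Language} {α : Type*} {m : ℕ} :
    ∀ {s : ℕ}, L.BoundedFormula α (m + s) → L.BoundedFormula α m
  | 0, φ => φ
  | _ + 1, φ => φ.ex.exsN

/-- `a : Fin n → K` is a `p`-basis of the field `K` of characteristic `p`: every element of `K`
is, in a unique way, a linear combination of the monomials `a₁^e₁ ⋯ aₙ^eₙ` (with `0 ≤ eᵢ < p`)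
with coefficients in the subfield `K^p` of `p`-th powers.  (A field with an `n`-element
`p`-basis satisfies `[K : K^p] = pⁿ`.) -/
def IsPBasis (p : ℕ) {n : ℕ} {K : Type*} [Field K] (a : Fin n → K) : Prop :=
  ∀ x : K, ∃! c : (Fin n → Fin p) → K,
    x = ∑ e : Fin n → Fin p, (c e) ^ p * ∏ i : Fin n, (a i) ^ (e i : ℕ)

/-!
A `p`-basis `a` turns the polynomial `∑ₑ cₑ ^ p * aᵉ` into a bijection `K ^ E → K`, where `E` is the
set of the `pⁿ ≥ 2` exponents `e`. More generally, let a term `t` of any language define a bijection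
`M ^ E → M`, with `E` finite and `2 ≤ |E|`. Substituting `t` into itself `r` times gives a term that
defines a bijection `M ^ (E ^ r) → M`, and `r ≤ |E ^ r|`, so a single element `w` codes arbitrary
`x₁, …, x_r` among its coordinates. Since `t` is a term, decoding `w` costs only existential
quantifiers: `∀ x ∃ y, ψ(x, y)` becomes `∀ w ∃ z ∃ y, w = t(z) ∧ ψ(z₁, …, z_r, y)`.
-/

section PrenexBlocks

variable {L : FirstOrder.Language.{v, w}} {α M : Type*} {m : ℕ}

theorem realize_exsN [L.Structure M] {s : ℕ} {φ : L.BoundedFormula α (m + s)} {v : α → M}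
    {xs : Fin m → M} :
    φ.exsN.Realize v xs ↔ ∃ ys : Fin s → M, φ.Realize v (Fin.append xs ys) := by
  induction s with
  | zero =>
    rw [Unique.exists_iff, Fin.append_right_nil xs _ rfl]
    rfl
  | succ s ih =>
    rw [BoundedFormula.exsN, ih]
    simp only [BoundedFormula.realize_ex, ← Fin.append_snoc]
    exact ⟨fun ⟨ys, y, h⟩ => ⟨Fin.snoc ys y, h⟩,
      fun ⟨ys, h⟩ => ⟨Fin.init ys, ys (Fin.last s), by rwa [Fin.snoc_init_self]⟩⟩

theorem realize_alls_exsN [L.Structure M] {s : ℕ} {φ : L.BoundedFormula α (m + s)} {v : α → M} :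
    (φ.exsN.alls : L.Formula α).Realize v ↔
      ∀ xs : Fin m → M, ∃ ys : Fin s → M, φ.Realize v (Fin.append xs ys) := by
  rw [BoundedFormula.realize_alls]
  exact forall_congr' fun _ => realize_exsN

theorem realize_relabel_formula [L.Structure M] {β : Type*} {χ : L.Formula β} {g : β → α ⊕ Fin m}
    {v : α → M} {xs : Fin m → M} :
    (BoundedFormula.relabel g χ : L.BoundedFormula α m).Realize v xs ↔
      χ.Realize (Sum.elim v xs ∘ g) := by
  rw [BoundedFormula.realize_relabel, Fin.castAdd_zero, Fin.cast_refl, Function.comp_id]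
  exact iff_of_eq (congrArg _ (Subsingleton.elim _ _))

theorem isQF_toFormula {φ : L.BoundedFormula α m} (hφ : φ.IsQF) : φ.toFormula.IsQF := by
  induction hφ with
  | falsum => exact BoundedFormula.isQF_bot
  | of_isAtomic h =>
    cases h with
    | equal t₁ t₂ => exact (BoundedFormula.IsAtomic.equal _ _).isQF
    | rel R ts => exact (BoundedFormula.IsAtomic.rel _ _).isQF
  | imp _ _ ih₁ ih₂ => exact ih₁.imp ih₂

theorem exists_isQF_realize_alls_exsN_iff {Y : Type*} [Finite Y]
    {χ : L.Formula (α ⊕ (Fin m ⊕ Y))} (hχ : χ.IsQF) :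
    ∃ (s : ℕ) (ψ : L.BoundedFormula α (m + s)), ψ.IsQF ∧
      ∀ (M : Type u) [L.Structure M] (v : α → M), (ψ.exsN.alls : L.Formula α).Realize v ↔
        ∀ xs : Fin m → M, ∃ y : Y → M, χ.Realize (Sum.elim v (Sum.elim xs y)) := by
  obtain ⟨s, ⟨ε⟩⟩ := Finite.exists_equiv_fin Y
  let g : α ⊕ (Fin m ⊕ Y) → α ⊕ Fin (m + s) := Sum.map id (finSumFinEquiv ∘ Sum.map id ε)
  let ψ : L.BoundedFormula α (m + s) := BoundedFormula.relabel g χ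
  refine ⟨s, ψ, hχ.relabel g, fun M _ v => ?_⟩
  have hψ (xs : Fin m → M) (y : Y → M) :
      ψ.Realize v (Fin.append xs (y ∘ ε.symm)) ↔ χ.Realize (Sum.elim v (Sum.elim xs y)) := by
    have hg : Sum.elim v (Fin.append xs (y ∘ ε.symm)) ∘ g = Sum.elim v (Sum.elim xs y) := by
      ext (a | i | y) <;> simp [g]
    rw [realize_relabel_formula, hg]
  rw [realize_alls_exsN]
  refine forall_congr' fun xs => ?_
  rw [← (ε.arrowCongr (Equiv.refl M)).exists_congr_right]
  exact exists_congr fun y => hψ xs y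

end PrenexBlocks

section IteratedTerm

variable {L : FirstOrder.Language.{v, w}} {E : Type*}

/-- The `k`-fold substitution of a term `t` into itself: `t` composed along the complete `E`-ary
tree of depth `k`, whose leaves, the variables of the new term, are the paths `Fin k → E`. -/
def iteratedTerm (t : L.Term E) : ∀ k : ℕ, L.Term (Fin k → E)
  | 0 => Term.var Fin.elim0
  | k + 1 => t.subst fun e => (iteratedTerm t k).relabel (Fin.cons e)

theorem bijective_realize_iteratedTerm {M : Type*} [L.Structure M] {t : L.Term E}
    (ht : Function.Bijective fun c : E → M => t.realize c) (k : ℕ) :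
    Function.Bijective fun c : (Fin k → E) → M => (iteratedTerm t k).realize c := by
  induction k with
  | zero => exact (Equiv.funUnique (Fin 0 → E) M).bijective
  | succ k ih =>
    let splitRoot : ((Fin (k + 1) → E) → M) ≃ (E → (Fin k → E) → M) :=
      ((Fin.consEquiv fun _ => E).symm.arrowCongr (Equiv.refl M)).trans (Equiv.curry _ _ _)
    have h := (ht.comp (Function.Bijective.piMap fun _ : E => ih)).comp splitRoot.bijective
    convert h using 2 with c
    simp only [iteratedTerm, Term.realize_subst, Term.realize_relabel]
    rfl

end IteratedTerm

section Coding

variable {L : FirstOrder.Language.{v, w}} {α : Type*} {r s : ℕ} {ψ : L.BoundedFormula α (r + s)}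

theorem exists_isQF_realize_iff_eq_realize_and {F : Type*} (hψ : ψ.IsQF) (t : L.Term F)
    (coord : Fin r → F) :
    ∃ χ : L.Formula (α ⊕ (Fin 1 ⊕ (F ⊕ Fin s))), χ.IsQF ∧
      ∀ (M : Type u) [L.Structure M] (v : α → M) (w : Fin 1 → M) (z : F → M) (ys : Fin s → M),
        χ.Realize (Sum.elim v (Sum.elim w (Sum.elim z ys))) ↔
          w 0 = t.realize z ∧ ψ.Realize v (Fin.append (z ∘ coord) ys) := by
  let decoding : L.Formula (α ⊕ (Fin 1 ⊕ (F ⊕ Fin s))) :=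
    (Term.var (Sum.inr (Sum.inl 0))).equal (t.relabel (Sum.inr ∘ Sum.inr ∘ Sum.inl))
  let matrix : L.Formula (α ⊕ (Fin 1 ⊕ (F ⊕ Fin s))) :=
    ψ.toFormula.relabel (Sum.map id (Sum.inr ∘ Sum.map coord id ∘ finSumFinEquiv.symm))
  have hdecoding : decoding.IsQF := (BoundedFormula.IsAtomic.equal _ _).isQF
  have hmatrix : matrix.IsQF := (isQF_toFormula hψ).relabel _
  refine ⟨decoding ⊓ matrix, hdecoding.inf hmatrix, fun M _ v w z ys => ?_⟩
  have hz : Sum.elim v (Sum.elim w (Sum.elim z ys)) ∘ Sum.inr ∘ Sum.inr ∘ Sum.inl = z := rfl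
  have hv : Sum.elim v (Sum.elim w (Sum.elim z ys)) ∘
      Sum.map id (Sum.inr ∘ Sum.map coord id ∘ finSumFinEquiv.symm) =
      Sum.elim v (Fin.append (z ∘ coord) ys) := by
    ext (a | i)
    · rfl
    · refine Fin.addCases (fun j => ?_) (fun j => ?_) i <;> simp
  simp only [Formula.realize_inf, decoding, matrix, Formula.realize_equal, Term.realize_var,
    Term.realize_relabel, Formula.realize_relabel, BoundedFormula.realize_toFormula, hv, hz,
    Sum.elim_inl, Sum.elim_inr, Sum.elim_comp_inl, Sum.elim_comp_inr]

theorem exists_alls_one_iff_of_bijective_realize_of_injective {F : Type*} [Finite F]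
    (hψ : ψ.IsQF) (t : L.Term F) {coord : Fin r → F} (hcoord : Function.Injective coord) :
    ∃ (s' : ℕ) (ψ' : L.BoundedFormula α (1 + s')), ψ'.IsQF ∧
      ∀ (M : Type u) [L.Structure M] [Nonempty M],
        Function.Bijective (fun z : F → M => t.realize z) → ∀ v : α → M,
          (ψ.exsN.alls : L.Formula α).Realize v ↔ (ψ'.exsN.alls : L.Formula α).Realize v := by
  obtain ⟨χ, hχ, hχ_iff⟩ := exists_isQF_realize_iff_eq_realize_and.{u} hψ t coord
  obtain ⟨s', ψ', hψ', hψ'_iff⟩ := exists_isQF_realize_alls_exsN_iff.{u} hχ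
  refine ⟨s', ψ', hψ', fun M _ _ ht v => ?_⟩
  rw [hψ'_iff, realize_alls_exsN]
  constructor
  · intro hφ w
    obtain ⟨z, hz⟩ := ht.surjective (w 0)
    obtain ⟨ys, hys⟩ := hφ (z ∘ coord)
    exact ⟨Sum.elim z ys, (hχ_iff M v w z ys).2 ⟨hz.symm, hys⟩⟩
  · intro hφ' xs
    obtain ⟨z, rfl⟩ := hcoord.surjective_comp_right xs
    obtain ⟨y, hy⟩ := hφ' fun _ => t.realize z
    rw [← Sum.elim_comp_inl_inr y, hχ_iff] at hy
    obtain rfl : z = y ∘ Sum.inl := ht.injective hy.1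
    exact ⟨_, hy.2⟩

end Coding

theorem exists_injective_fin_pi (E : Type*) [Finite E] [Nontrivial E] (r : ℕ) :
    ∃ coord : Fin r → (Fin r → E), Function.Injective coord := by
  have := Fintype.ofFinite E
  have hcard : Fintype.card (Fin r) ≤ Fintype.card (Fin r → E) := by
    simpa using (Nat.lt_pow_self Fintype.one_lt_card).le
  obtain ⟨coord⟩ := Function.Embedding.nonempty_of_card_le hcard
  exact ⟨coord, coord.injective⟩

theorem stmt7_general {L : FirstOrder.Language.{v, w}} {E : Type*} [Finite E] [Nontrivial E]
    (t : L.Term E) {α : Type*} {r s : ℕ} {ψ : L.BoundedFormula α (r + s)} (hψ : ψ.IsQF) :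
    ∃ (s' : ℕ) (ψ' : L.BoundedFormula α (1 + s')), ψ'.IsQF ∧
      ∀ (M : Type u) [L.Structure M] [Nonempty M],
        Function.Bijective (fun c : E → M => t.realize c) → ∀ v : α → M,
          (ψ.exsN.alls : L.Formula α).Realize v ↔ (ψ'.exsN.alls : L.Formula α).Realize v := by
  obtain ⟨coord, hcoord⟩ := exists_injective_fin_pi E r
  obtain ⟨s', ψ', hψ', h⟩ :=
    exists_alls_one_iff_of_bijective_realize_of_injective.{u} hψ (iteratedTerm t r) hcoord
  exact ⟨s', ψ', hψ', fun M _ _ ht => h M (bijective_realize_iteratedTerm ht r)⟩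

section PBasis

variable {L : FirstOrder.Language.{v, w}} {γ κ : Type*}

/-- The `L`-term given by an integer polynomial whose variables are those in `γ` together with the
constant symbols `c k`. -/
noncomputable def polynomialTerm (ι : Language.ring →ᴸ L) (c : κ → L.Constants)
    (P : FreeCommRing (γ ⊕ κ)) : L.Term γ :=
  (ι.onTerm (Ring.termOfFreeCommRing P)).subst (Sum.elim Term.var fun k => (c k).term)

theorem realize_polynomialTerm {K : Type*} [CommRing K] [L.Structure K] (ι : Language.ring →ᴸ L)
    [ι.IsExpansionOn K] (c : κ → L.Constants) (P : FreeCommRing (γ ⊕ κ)) (v : γ → K) :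
    (polynomialTerm ι c P).realize v =
      FreeCommRing.lift (Sum.elim v fun k => (constantMap (c k) : K)) P := by
  rw [polynomialTerm, Term.realize_subst, LHom.realize_onTerm, Ring.realize_termOfFreeCommRing]
  congr 2
  ext (g | k) <;> simp

/-- The term `∑ₑ zₑ ^ p * cᵉ` which computes an element from its coordinates `z` with respect to the
`p`-basis named by the constant symbols `c`. -/
noncomputable def pBasisTerm (p : ℕ) {n : ℕ} (ι : Language.ring →ᴸ L) (c : Fin n → L.Constants) :
    L.Term (Fin n → Fin p) :=
  polynomialTerm ι c (∑ e : Fin n → Fin p,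
    FreeCommRing.of (Sum.inl e) ^ p * ∏ i : Fin n, FreeCommRing.of (Sum.inr i) ^ (e i : ℕ))

theorem IsPBasis.bijective_realize_pBasisTerm {K : Type*} [Field K] [L.Structure K]
    {ι : Language.ring →ᴸ L} [ι.IsExpansionOn K] {p n : ℕ} {a : Fin n → K} (ha : IsPBasis p a)
    {c : Fin n → L.Constants} (hc : ∀ i, (constantMap (c i) : K) = a i) :
    Function.Bijective fun z : (Fin n → Fin p) → K => (pBasisTerm p ι c).realize z := by
  rw [Function.bijective_iff_existsUnique]
  simpa [pBasisTerm, realize_polynomialTerm, hc, eq_comm, IsPBasis] using ha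

end PBasis

/-- let `p` be a prime, `n ≥ 1`, and `L` a language extending the language of rings
(via `ι`) together with `n` constant symbols `c₁, …, cₙ`.  For every `L`-formula of the form
`∀ x₁ … x_r ∃ y₁ … yₛ ψ` (`ψ` quantifier-free) there is an `L`-formula of the form
`∀ w ∃ y₁ … y_{s'} ψ'` (`ψ'` quantifier-free) with the same free variables which is equivalent
to it in every field `K` of characteristic `p` with `[K : K^p] = pⁿ`, for every `L`-structure on
`K` expanding the ring structure and interpreting `cᵢ` as the members of a `p`-basis. -/
theorem stmt7 (p : ℕ) (hp : p.Prime) (n : ℕ) (hn : 1 ≤ n)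
    (L : FirstOrder.Language.{v, w}) (ι : Language.ring →ᴸ L) (c : Fin n → L.Constants)
    (α : Type*) (r s : ℕ) (ψ : L.BoundedFormula α (r + s)) (hψ : ψ.IsQF) :
    ∃ (s' : ℕ) (ψ' : L.BoundedFormula α (1 + s')), ψ'.IsQF ∧
      ∀ (K : Type u) [Field K] [CharP K p] [L.Structure K] [ι.IsExpansionOn K]
        (a : Fin n → K), IsPBasis p a → (∀ i, (constantMap (c i) : K) = a i) →
        ∀ v : α → K,
          (ψ.exsN.alls : L.Formula α).Realize v ↔ (ψ'.exsN.alls : L.Formula α).Realize v := by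
  have : Nonempty (Fin n) := Fin.pos_iff_nonempty.1 hn
  have : Nontrivial (Fin p) := Fin.nontrivial_iff_two_le.2 hp.two_le
  obtain ⟨s', ψ', hψ', h⟩ := stmt7_general.{u} (pBasisTerm p ι c) hψ
  exact ⟨s', ψ', hψ', fun K _ _ _ _ a ha hc => h K (ha.bijective_realize_pBasisTerm hc)⟩
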